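/- Let p be a prime, q = 1/p, and let n ≥ 2 and μ ≥ 2 be integers. Then P(n, p^μ) = (1−q)·P(n−1, p^μ) + q(1−q^{n−1})·P(n−2, p^μ) + q^n(1−q)·P(n−1, p^{μ−1}) + q^{n+1}·P(n, p^{μ−2}). (When μ = 2 the last term vanishes automatically, since P(n, p^0) = P(n, 1) = 0.) -/

import Mathlib

/-- Number of symmetric `n × n` matrices over `ZMod m` with nonzero determinant. -/
noncomputable def Nsym (n m : ℕ) : ℕ :=
  Nat.card {A : Matrix (Fin n) (Fin n) (ZMod m) // A.IsSymm ∧ A.det ≠ 0}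

/-- Proportion of symmetric `n × n` matrices over `ZMod m` with nonzero determinant. -/
noncomputable def Psym (n m : ℕ) : ℝ :=
  (Nsym n m : ℝ) / (m : ℝ) ^ (n * (n + 1) / 2)

open Matrix Finset
open scoped Classical

/-- The indicator function of the nonzero elements. -/
noncomputable def nonzeroIndicator {R : Type*} [Zero R] (x : R) : ℝ := if x = 0 then 0 else 1

/-- The additive group of symmetric matrices. -/
def symMatrices (ι R : Type*) [AddCommGroup R] : AddSubgroup (Matrix ι ι R) where
  carrier := {A | A.IsSymm}
  add_mem' := fun ha hb => Matrix.IsSymm.add ha hb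
  zero_mem' := Matrix.isSymm_zero
  neg_mem' := fun ha => Matrix.IsSymm.neg ha

/-- The symmetric matrix with corner entry `a`, remaining first row `v`, and lower block `B`. -/
def bordered {ι R : Type*} (a : R) (v : ι → R) (B : Matrix ι ι R) :
    Matrix (Unit ⊕ ι) (Unit ⊕ ι) R :=
  fromBlocks (of fun _ _ => a) (replicateRow Unit v) (replicateCol Unit v) B

/-- The number of symmetric matrices `A` with `r * det A ≠ 0`, as a real number. -/
noncomputable def detCount (ι : Type*) {R : Type*} [Fintype ι] [DecidableEq ι] [CommRing R]
    [Fintype R] (r : R) : ℝ :=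
  ∑ A : symMatrices ι R, nonzeroIndicator (r * A.1.det)

lemma nonzeroIndicator_mul_unit {R : Type*} [CommRing R] {r u x : R} (hu : IsUnit u) :
    nonzeroIndicator (r * (u * x)) = nonzeroIndicator (r * x) := by
  have : r * (u * x) = u * (r * x) := by ring
  simp [nonzeroIndicator, this, hu.mul_right_eq_zero]

lemma sum_comp_of_surjective {G H : Type*} [AddCommGroup G] [AddCommGroup H] [Fintype G]
    [Fintype H] (φ : G →+ H) (hφ : Function.Surjective φ) (f : H → ℝ) :
    ∑ g, f (φ g) = (Fintype.card G / Fintype.card H : ℝ) * ∑ h, f h := by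
  have hc : ∀ h : H, #{g : G | φ g = h} = #{g : G | φ g = 0} := fun h =>
    AddMonoidHom.card_fiber_eq_of_mem_range φ (hφ h) (hφ 0)
  have key : ∀ f : H → ℝ, ∑ g, f (φ g) = (#{g : G | φ g = 0} : ℝ) * ∑ h, f h := by
    intro f
    rw [← Finset.sum_fiberwise (s := univ) (g := φ), mul_sum]
    refine sum_congr rfl fun h _ => ?_
    rw [← hc h, ← nsmul_eq_mul, ← sum_const]
    refine sum_congr rfl fun g hg => ?_
    rw [(mem_filter.1 hg).2]
  have h1 := key fun _ => 1
  simp only [sum_const, card_univ, nsmul_eq_mul, mul_one] at h1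
  have : (Fintype.card H : ℝ) ≠ 0 := by exact_mod_cast Fintype.card_ne_zero
  rw [key f, h1]
  field_simp

section CommRing

variable {ι κ R : Type*} [Fintype ι] [DecidableEq ι] [Fintype κ] [DecidableEq κ]
  [CommRing R] [Fintype R]

/-- Splitting a symmetric matrix into corner, border and lower block. -/
def symMatricesEquiv (ι R : Type*) [CommRing R] :
    symMatrices (Unit ⊕ ι) R ≃ R × (ι → R) × symMatrices ι R where
  toFun A := (A.1 (.inl ()) (.inl ()), fun i => A.1 (.inl ()) (.inr i),
    ⟨A.1.submatrix .inr .inr, Matrix.IsSymm.submatrix A.2 _⟩)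
  invFun x := ⟨bordered x.1 x.2.1 x.2.2.1, by
    refine Matrix.IsSymm.fromBlocks ?_ ?_ x.2.2.2
    · ext; rfl
    · ext; rfl⟩
  left_inv A := by
    ext i j
    have h : A.1.IsSymm := A.2
    rcases i with i | i <;> rcases j with j | j <;> simp [bordered]
    exact (h.apply _ _)
  right_inv x := by
    obtain ⟨a, v, B⟩ := x
    refine Prod.ext ?_ (Prod.ext ?_ ?_)
    · simp [bordered]
    · ext; simp [bordered]
    · ext; simp [bordered]

lemma sum_symMatrices (f : Matrix (Unit ⊕ ι) (Unit ⊕ ι) R → ℝ) :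
    ∑ A : symMatrices (Unit ⊕ ι) R, f A.1
      = ∑ a : R, ∑ v : ι → R, ∑ B : symMatrices ι R, f (bordered a v B.1) := by
  rw [← (symMatricesEquiv ι R).symm.sum_comp, Fintype.sum_prod_type]
  refine sum_congr rfl fun a _ => ?_
  rw [Fintype.sum_prod_type]
  rfl

lemma card_symMatrices_sum :
    (Fintype.card (symMatrices (Unit ⊕ ι) R) : ℝ)
      = (Fintype.card R : ℝ) ^ (Fintype.card ι + 1) * Fintype.card (symMatrices ι R) := by
  rw [Fintype.card_congr (symMatricesEquiv ι R)]
  simp [pow_succ]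
  ring

/-- Transport of symmetric matrices along a reindexing. -/
def symMatricesReindex (e : ι ≃ κ) : symMatrices ι R ≃ symMatrices κ R :=
  (Matrix.reindex e e).subtypeEquiv fun A => by
    constructor
    · exact fun h => Matrix.IsSymm.submatrix h _
    · intro h
      have := Matrix.IsSymm.submatrix h e
      rw [Matrix.reindex_apply, Matrix.submatrix_submatrix] at this
      simp only [Equiv.symm_comp_self, Matrix.submatrix_id_id] at this
      exact this

lemma detCount_congr (e : ι ≃ κ) (r : R) : detCount ι r = detCount κ r := by
  refine Fintype.sum_equiv (symMatricesReindex e) _ _ fun A => ?_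
  simp [symMatricesReindex]

/-- Schur complement: summing over the lower block removes an invertible upper block. -/
lemma sum_det_fromBlocks (r : R) (A : Matrix ι ι R) (B : Matrix ι κ R) (C : Matrix κ ι R)
    (hA : IsUnit A.det) (hs : (C * A⁻¹ * B).IsSymm) :
    ∑ D : symMatrices κ R, nonzeroIndicator (r * (fromBlocks A B C D.1).det)
      = detCount κ r := by
  have := A.invertibleOfIsUnitDet hA
  let S : symMatrices κ R := ⟨C * A⁻¹ * B, hs⟩
  refine Fintype.sum_equiv (Equiv.subRight S) _ _ fun D => ?_
  rw [Matrix.det_fromBlocks₁₁, nonzeroIndicator_mul_unit hA, invOf_eq_nonsing_inv]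
  rfl

lemma sum_det_of_isUnit (r s a : R) (ha : IsUnit a) (v : ι → R) :
    ∑ D : symMatrices ι R, nonzeroIndicator
      (r * (fromBlocks (of fun _ _ => a) (replicateRow Unit v)
        (s • replicateCol Unit v) D.1).det) = detCount ι r := by
  refine sum_det_fromBlocks r _ _ _ ?_ ?_
  · simpa using ha
  · have : (of fun _ _ : Unit => a)⁻¹ = (of fun _ _ : Unit => Ring.inverse a) := by
      ext
      simp
    rw [this]
    ext i j
    simp [Matrix.mul_apply]
    ring

lemma sum_det_bordered_single (r a : R) (ha : ∀ c : R, IsUnit (a * c - 1)) :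
    ∑ B : symMatrices (Unit ⊕ ι) R,
      nonzeroIndicator (r * (bordered a (Pi.single (Sum.inl ()) 1) B.1).det)
      = (Fintype.card R : ℝ) ^ (Fintype.card ι + 1) * detCount ι r := by
  rw [sum_symMatrices (fun B =>
    nonzeroIndicator (r * (bordered a (Pi.single (Sum.inl ()) 1) B).det))]
  have key : ∀ (c : R) (w : ι → R), ∑ D : symMatrices ι R,
      nonzeroIndicator (r * (bordered a (Pi.single (Sum.inl ()) 1) (bordered c w D.1)).det)
      = detCount ι r := by
    intro c w
    set K : Matrix (Unit ⊕ Unit) (Unit ⊕ Unit) R := bordered a (fun _ => 1) (of fun _ _ => c)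
    set L : Matrix (Unit ⊕ Unit) ι R := fun i j => Sum.elim 0 (fun _ => w j) i
    have hK : K.det = a * c - 1 := by
      rw [← Matrix.det_submatrix_equiv_self (finSumFinEquiv.symm.trans
        (Equiv.sumCongr finOneEquiv finOneEquiv) : Fin (1 + 1) ≃ Unit ⊕ Unit), Matrix.det_fin_two]
      change a * c - 1 * 1 = _
      rw [one_mul]
    have hKs : K.IsSymm := by
      refine Matrix.IsSymm.fromBlocks ?_ ?_ ?_ <;> ext <;> rfl
    rw [← sum_det_fromBlocks r K L Lᵀ (hK ▸ ha c)]
    · refine sum_congr rfl fun D _ => ?_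
      congr 2
      rw [← Matrix.det_submatrix_equiv_self (Equiv.sumAssoc Unit Unit ι).symm]
      congr 1
      ext i j
      rcases i with i | i | i <;> rcases j with j | j | j <;>
        simp [bordered, K, L] <;> rfl
    · rw [Matrix.IsSymm, Matrix.transpose_mul, Matrix.transpose_mul, Matrix.transpose_transpose,
        Matrix.transpose_nonsing_inv, hKs.eq, Matrix.mul_assoc]
  simp only [key]
  simp [pow_succ]
  ring

/-- Congruence by an invertible matrix as a permutation of the symmetric matrices. -/
noncomputable def congruenceEquiv (h : Matrix ι ι R) (hh : IsUnit h.det) :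
    symMatrices ι R ≃ symMatrices ι R where
  toFun B := ⟨hᵀ * B.1 * h, by
    have hB : B.1.IsSymm := B.2
    simp [symMatrices, Matrix.IsSymm, Matrix.mul_assoc, hB.eq]⟩
  invFun B := ⟨(h⁻¹)ᵀ * B.1 * h⁻¹, by
    have hB : B.1.IsSymm := B.2
    simp [symMatrices, Matrix.IsSymm, Matrix.mul_assoc, hB.eq]⟩
  left_inv B := by
    ext1
    have h2 : (h⁻¹)ᵀ * hᵀ = 1 := by
      rw [← Matrix.transpose_mul, Matrix.mul_nonsing_inv _ hh, Matrix.transpose_one]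
    calc (h⁻¹)ᵀ * (hᵀ * B.1 * h) * h⁻¹ = ((h⁻¹)ᵀ * hᵀ) * B.1 * (h * h⁻¹) := by
          simp only [Matrix.mul_assoc]
      _ = B.1 := by rw [h2, Matrix.mul_nonsing_inv _ hh]; simp
  right_inv B := by
    ext1
    have h2 : hᵀ * (h⁻¹)ᵀ = 1 := by
      rw [← Matrix.transpose_mul, Matrix.nonsing_inv_mul _ hh, Matrix.transpose_one]
    calc hᵀ * ((h⁻¹)ᵀ * B.1 * h⁻¹) * h = (hᵀ * (h⁻¹)ᵀ) * B.1 * (h⁻¹ * h) := by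
          simp only [Matrix.mul_assoc]
      _ = B.1 := by rw [h2, Matrix.nonsing_inv_mul _ hh]; simp

lemma sum_det_bordered_vecMul (r a : R) (v : ι → R) (h : Matrix ι ι R) (hh : IsUnit h.det) :
    ∑ B : symMatrices ι R, nonzeroIndicator (r * (bordered a (v ᵥ* h) B.1).det)
      = ∑ B : symMatrices ι R, nonzeroIndicator (r * (bordered a v B.1).det) := by
  symm
  refine Fintype.sum_equiv (congruenceEquiv h hh) _ _ fun B => ?_
  have : bordered a (v ᵥ* h) (congruenceEquiv h hh B).1
      = (fromBlocks 1 0 0 h : Matrix (Unit ⊕ ι) (Unit ⊕ ι) R)ᵀ * bordered a v B.1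
        * fromBlocks 1 0 0 h := by
    simp only [bordered, congruenceEquiv, Matrix.fromBlocks_transpose, Matrix.fromBlocks_multiply]
    congr 1
    · simp
    · ext i j; simp [Matrix.vecMul, Matrix.mul_apply, dotProduct]
    · ext i j; simp [Matrix.vecMul, Matrix.mul_apply, dotProduct, mul_comm]
    · simp
  rw [this, Matrix.det_mul, Matrix.det_mul, Matrix.det_transpose, Matrix.det_fromBlocks_zero₂₁]
  rw [show r * (det 1 * h.det * (bordered a v B.1).det * (det (1 : Matrix Unit Unit R) * h.det))
    = r * ((h.det * h.det) * (bordered a v B.1).det) by simp; ring,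
    nonzeroIndicator_mul_unit (hh.mul hh)]

omit [Fintype R] in
lemma exists_single_vecMul (i : ι) (v : ι → R) (hv : ∃ j, IsUnit (v j)) :
    ∃ h : Matrix ι ι R, IsUnit h.det ∧ Pi.single i 1 ᵥ* h = v := by
  obtain ⟨j, hj⟩ := hv
  refine ⟨(Matrix.updateRow 1 j v).submatrix (Equiv.swap i j) id, ?_, ?_⟩
  · rw [Matrix.det_permute]
    have hd : (Matrix.updateRow (1 : Matrix ι ι R) j v).det = v j := by
      rw [← Matrix.cramer_transpose_apply]
      simp
    rw [hd]
    refine IsUnit.mul ?_ hj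
    exact (Units.isUnit _).map (Int.castRingHom R)
  · ext k
    simp

lemma sum_det_bordered_of_exists_isUnit (r a : R) (ha : ∀ c : R, IsUnit (a * c - 1))
    (v : Unit ⊕ ι → R) (hv : ∃ j, IsUnit (v j)) :
    ∑ B : symMatrices (Unit ⊕ ι) R, nonzeroIndicator (r * (bordered a v B.1).det)
      = (Fintype.card R : ℝ) ^ (Fintype.card ι + 1) * detCount ι r := by
  obtain ⟨h, hh, rfl⟩ := exists_single_vecMul (Sum.inl ()) v hv
  rw [sum_det_bordered_vecMul r a _ h hh, sum_det_bordered_single r a ha]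

omit [Fintype R] in
lemma sum_filter_smul {M : Type*} [AddCommGroup M] [Module R M] [Fintype M] (π : R)
    (P : M → Prop) [DecidablePred P] (hP : ∀ x, P x ↔ ∃ y, π • y = x) (f : M → ℝ) :
    ∑ x with P x, f x = (#{x : M | P x} / Fintype.card M : ℝ) * ∑ x, f (π • x) := by
  have h := sum_comp_of_surjective (DistribSMul.toAddMonoidHom M π).rangeRestrict
    (AddMonoidHom.rangeRestrict_surjective _) (fun x => f x.1)
  have hs : ∀ x : M, x ∈ univ.filter P ↔ x ∈ (DistribSMul.toAddMonoidHom M π).range := fun x => by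
    simp [AddMonoidHom.mem_range, hP]
  have hc : Fintype.card (DistribSMul.toAddMonoidHom M π).range = #{x : M | P x} :=
    Fintype.card_of_subtype _ hs
  have h1 : ((#{x : M | P x} : ℕ) : ℝ) ≠ 0 := by
    rw [← hc]; exact_mod_cast Fintype.card_ne_zero
  have h2 : (Fintype.card M : ℝ) ≠ 0 := by exact_mod_cast Fintype.card_ne_zero
  change ∑ x, f (π • x) = _ at h
  rw [Finset.sum_subtype _ hs, h, hc]
  field_simp

lemma sum_dvd (π : R) (f : R → ℝ) :
    ∑ x with π ∣ x, f x = (#{x : R | π ∣ x} / Fintype.card R : ℝ) * ∑ x, f (π * x) :=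
  sum_filter_smul π (fun x => π ∣ x) (fun x => by simp [dvd_def, eq_comm]) f

lemma card_filter_forall_dvd (π : R) :
    #{v : ι → R | ∀ i, π ∣ v i} = #{x : R | π ∣ x} ^ Fintype.card ι := by
  rw [← Fintype.card_subtype, ← Fintype.card_subtype,
    Fintype.card_congr (Equiv.subtypePiEquivPi (p := fun (_ : ι) (x : R) => π ∣ x))]
  simp

lemma sum_forall_dvd (π : R) (f : (ι → R) → ℝ) :
    ∑ v with ∀ i, π ∣ v i, f v
      = (#{x : R | π ∣ x} / Fintype.card R : ℝ) ^ Fintype.card ι * ∑ v, f (π • v) := by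
  rw [sum_filter_smul π (fun v : ι → R => ∀ i, π ∣ v i), card_filter_forall_dvd, div_pow]
  · simp
  · intro v
    constructor
    · intro hv
      choose y hy using hv
      exact ⟨y, funext fun i => (hy i).symm⟩
    · rintro ⟨y, rfl⟩ i
      exact ⟨y i, rfl⟩

omit [Fintype R] in
lemma det_fromBlocks_smul_row (s a : R) (u v : ι → R) (B : Matrix ι ι R) :
    (fromBlocks (of fun _ _ => s * a) (replicateRow Unit (s • v)) (replicateCol Unit u) B).det
      = s * (fromBlocks (of fun _ _ => a) (replicateRow Unit v) (replicateCol Unit u) B).det := by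
  have : fromBlocks (of fun _ _ => s * a) (replicateRow Unit (s • v)) (replicateCol Unit u) B
      = fromBlocks (s • 1) 0 0 1
        * fromBlocks (of fun _ _ => a) (replicateRow Unit v) (replicateCol Unit u) B := by
    rw [Matrix.fromBlocks_multiply]
    congr 1
    all_goals simp
    all_goals ext; simp
  rw [this, Matrix.det_mul, Matrix.det_fromBlocks_zero₂₁]
  simp

omit [Fintype R] in
lemma det_fromBlocks_smul_col (s a : R) (u v : ι → R) (B : Matrix ι ι R) :
    (fromBlocks (of fun _ _ => s * a) (replicateRow Unit v) (replicateCol Unit (s • u)) B).det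
      = s * (fromBlocks (of fun _ _ => a) (replicateRow Unit v) (replicateCol Unit u) B).det := by
  rw [← Matrix.det_transpose, Matrix.fromBlocks_transpose,
    ← Matrix.det_transpose (fromBlocks _ _ _ B), Matrix.fromBlocks_transpose]
  exact det_fromBlocks_smul_row s a v u Bᵀ

lemma detCount_recurrence (π : R) (hπ : ∀ x : R, ¬ IsUnit x ↔ π ∣ x)
    (q : ℝ) (hq : (Nat.card {x : R // π ∣ x} : ℝ) = q * Fintype.card R) :
    detCount (Unit ⊕ Unit ⊕ ι) (1 : R)
      = (1 - q) * (Fintype.card R : ℝ) ^ (Fintype.card ι + 2) * detCount (Unit ⊕ ι) (1 : R)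
        + q * (1 - q ^ (Fintype.card ι + 1)) * (Fintype.card R : ℝ) ^ (2 * Fintype.card ι + 3)
          * detCount ι (1 : R)
        + q ^ (Fintype.card ι + 2) * (1 - q) * (Fintype.card R : ℝ) ^ (Fintype.card ι + 2)
          * detCount (Unit ⊕ ι) π
        + q ^ (Fintype.card ι + 3) * detCount (Unit ⊕ Unit ⊕ ι) (π ^ 2) := by
  rw [Nat.card_eq_fintype_card, Fintype.card_subtype] at hq
  set N : ℝ := ((Fintype.card R : ℕ) : ℝ) with hN
  have hN0 : N ≠ 0 := by rw [hN]; exact_mod_cast Fintype.card_ne_zero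
  set d := Fintype.card ι with hd
  have hqd : (#{x : R | π ∣ x} : ℝ) / N = q := by rw [hq]; field_simp
  have hcard : Fintype.card (Unit ⊕ ι) = d + 1 := by simp [hd, add_comm]
  have hfilter : (univ.filter fun x : R => ¬ IsUnit x) = univ.filter fun x : R => π ∣ x := by
    ext x; simp [hπ]
  have hunits : (#{x : R | IsUnit x} : ℝ) = (1 - q) * N := by
    have h := Finset.card_filter_add_card_filter_not (s := (univ : Finset R)) (fun x => IsUnit x)
    rw [hfilter, card_univ] at h
    have h' : (#{x : R | IsUnit x} : ℝ) + #{x : R | π ∣ x} = N := by rw [hN]; exact_mod_cast h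
    rw [hq] at h'
    linarith
  have hvec : (#{v : Unit ⊕ ι → R | ¬ ∀ i, π ∣ v i} : ℝ) = (1 - q ^ (d + 1)) * N ^ (d + 1) := by
    have h := Finset.card_filter_add_card_filter_not (s := (univ : Finset (Unit ⊕ ι → R)))
      (fun v => ∀ i, π ∣ v i)
    rw [card_filter_forall_dvd, card_univ, Fintype.card_fun, hcard] at h
    have h' : (#{x : R | π ∣ x} : ℝ) ^ (d + 1) + #{v : Unit ⊕ ι → R | ¬ ∀ i, π ∣ v i}
      = N ^ (d + 1) := by rw [hN]; exact_mod_cast h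
    rw [hq, mul_pow] at h'
    linarith
  have hvcard : (Fintype.card (Unit ⊕ ι → R) : ℝ) = N ^ (d + 1) := by
    rw [Fintype.card_fun, hcard]; push_cast; rfl
  -- the corner is a unit
  have hcorner : ∑ a with IsUnit a, ∑ v : Unit ⊕ ι → R, ∑ B : symMatrices (Unit ⊕ ι) R,
      nonzeroIndicator (1 * (bordered a v B.1).det)
      = (1 - q) * N ^ (d + 2) * detCount (Unit ⊕ ι) (1 : R) := by
    have : ∀ a ∈ univ.filter (fun a : R => IsUnit a), ∑ v : Unit ⊕ ι → R,
        ∑ B : symMatrices (Unit ⊕ ι) R, nonzeroIndicator (1 * (bordered a v B.1).det)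
        = N ^ (d + 1) * detCount (Unit ⊕ ι) (1 : R) := by
      intro a ha
      have h := fun v => sum_det_of_isUnit (ι := Unit ⊕ ι) 1 1 a (mem_filter.1 ha).2 v
      simp only [one_smul] at h
      simp only [bordered, h, sum_const, card_univ, nsmul_eq_mul, hvcard]
    rw [sum_congr rfl this, sum_const, nsmul_eq_mul, hunits]
    ring
  -- the corner is not a unit but some other entry of the first row is
  have hrow : ∑ a with π ∣ a, ∑ v : Unit ⊕ ι → R with ¬ ∀ i, π ∣ v i,
      ∑ B : symMatrices (Unit ⊕ ι) R, nonzeroIndicator (1 * (bordered a v B.1).det)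
      = q * (1 - q ^ (d + 1)) * N ^ (2 * d + 3) * detCount ι (1 : R) := by
    have : ∀ a ∈ univ.filter (fun a : R => π ∣ a),
        ∑ v : Unit ⊕ ι → R with ¬ ∀ i, π ∣ v i,
        ∑ B : symMatrices (Unit ⊕ ι) R, nonzeroIndicator (1 * (bordered a v B.1).det)
        = (1 - q ^ (d + 1)) * N ^ (d + 1) * (N ^ (d + 1) * detCount ι (1 : R)) := by
      intro a ha
      rw [← hvec, ← nsmul_eq_mul, ← sum_const]
      refine sum_congr rfl fun v hv => ?_
      refine sum_det_bordered_of_exists_isUnit 1 a ?_ v ?_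
      · intro c
        by_contra hc
        rw [hπ] at hc
        have h1 : π ∣ 1 := by
          have := dvd_sub ((mem_filter.1 ha).2.mul_right c) hc
          simpa using this
        exact (hπ 1).2 h1 isUnit_one
      · have := (mem_filter.1 hv).2
        push Not at this
        obtain ⟨j, hj⟩ := this
        exact ⟨j, by_contra fun h => hj ((hπ _).1 h)⟩
    rw [sum_congr rfl this, sum_const, nsmul_eq_mul, hq]
    ring
  -- the first row is divisible by `π`
  have hdvd : ∑ a with π ∣ a, ∑ v : Unit ⊕ ι → R with ∀ i, π ∣ v i,
      ∑ B : symMatrices (Unit ⊕ ι) R, nonzeroIndicator (1 * (bordered a v B.1).det)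
      = q ^ (d + 2) * (1 - q) * N ^ (d + 2) * detCount (Unit ⊕ ι) π
        + q ^ (d + 3) * detCount (Unit ⊕ Unit ⊕ ι) (π ^ 2) := by
    rw [sum_dvd]
    simp only [sum_forall_dvd, hcard]
    rw [← hN, hqd, ← mul_sum,
      ← Finset.sum_filter_add_sum_filter_not univ (fun a : R => IsUnit a), hfilter, sum_dvd,
      ← hN, hqd]
    have hunit : ∀ a ∈ univ.filter (fun a : R => IsUnit a), ∑ v : Unit ⊕ ι → R,
        ∑ B : symMatrices (Unit ⊕ ι) R,
          nonzeroIndicator (1 * (bordered (π * a) (π • v) B.1).det)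
        = N ^ (d + 1) * detCount (Unit ⊕ ι) π := by
      intro a ha
      have h := fun v => sum_det_of_isUnit (ι := Unit ⊕ ι) π π a (mem_filter.1 ha).2 v
      simp only [← replicateCol_smul] at h
      simp only [bordered, det_fromBlocks_smul_row, one_mul, h, sum_const, card_univ,
        nsmul_eq_mul, hvcard]
    have hsq : ∑ a : R, ∑ v : Unit ⊕ ι → R, ∑ B : symMatrices (Unit ⊕ ι) R,
        nonzeroIndicator (1 * (bordered (π * (π * a)) (π • v) B.1).det)
        = detCount (Unit ⊕ Unit ⊕ ι) (π ^ 2) := by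
      rw [detCount, sum_symMatrices (fun A => nonzeroIndicator (π ^ 2 * A.det))]
      simp only [bordered, det_fromBlocks_smul_row, det_fromBlocks_smul_col, one_mul]
      simp only [← mul_assoc, pow_two]
    rw [sum_congr rfl hunit, sum_const, nsmul_eq_mul, hunits, hsq]
    ring
  rw [detCount, sum_symMatrices (fun A => nonzeroIndicator (1 * A.det)),
    ← Finset.sum_filter_add_sum_filter_not univ (fun a : R => IsUnit a), hfilter, hcorner]
  have hsplit : ∀ a : R, ∑ v : Unit ⊕ ι → R, ∑ B : symMatrices (Unit ⊕ ι) R,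
      nonzeroIndicator (1 * (bordered a v B.1).det) = _ := fun a =>
    (Finset.sum_filter_add_sum_filter_not univ (fun v : Unit ⊕ ι → R => ∀ i, π ∣ v i) _).symm
  simp only [hsplit]
  rw [sum_add_distrib, hdvd, hrow]
  ring

end CommRing

lemma card_symMatrices_fin (n : ℕ) (R : Type*) [CommRing R] [Fintype R] :
    (Fintype.card (symMatrices (Fin n) R) : ℝ) = (Fintype.card R : ℝ) ^ (n * (n + 1) / 2) := by
  induction n with
  | zero =>
    have : Unique (symMatrices (Fin 0) R) := ⟨⟨0⟩, fun A => Subsingleton.elim _ _⟩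
    simp
  | succ n ih =>
    have e : Fin (n + 1) ≃ Unit ⊕ Fin n := Fintype.equivOfCardEq (by simp [add_comm])
    rw [Fintype.card_congr (symMatricesReindex e), card_symMatrices_sum, ih, Fintype.card_fin,
      ← pow_add]
    congr 1
    have : (n + 1) * (n + 1 + 1) = n * (n + 1) + (n + 1) * 2 := by ring
    rw [this, Nat.add_mul_div_right _ _ two_pos, add_comm]

lemma Nsym_eq_detCount (n m : ℕ) [NeZero m] : (Nsym n m : ℝ) = detCount (Fin n) (1 : ZMod m) := by
  rw [Nsym, detCount]
  simp only [nonzeroIndicator, one_mul]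
  have h : Nat.card {A : Matrix (Fin n) (Fin n) (ZMod m) // A.IsSymm ∧ A.det ≠ 0}
      = Nat.card {A : symMatrices (Fin n) (ZMod m) // A.1.det ≠ 0} :=
    Nat.card_congr (Equiv.subtypeSubtypeEquivSubtypeInter
      (fun A => A ∈ symMatrices (Fin n) (ZMod m)) (fun A => A.det ≠ 0)).symm
  rw [h, Nat.card_eq_fintype_card, Fintype.card_subtype, Finset.card_filter]
  push_cast
  refine sum_congr rfl fun A _ => ?_
  by_cases h : A.1.det = 0 <;> simp [h]

lemma detCount_eq_mul_Psym {n m m' : ℕ} [NeZero m] [NeZero m'] (h : m' ∣ m)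
    (r : ZMod m) (hr : ∀ x : ZMod m, r * x = 0 ↔ ZMod.castHom h (ZMod m') x = 0) :
    detCount (Fin n) r = (m : ℝ) ^ (n * (n + 1) / 2) * Psym n m' := by
  let φ := ZMod.castHom h (ZMod m')
  let Φ : symMatrices (Fin n) (ZMod m) →+ symMatrices (Fin n) (ZMod m') :=
    { toFun := fun A => ⟨φ.mapMatrix A.1, Matrix.IsSymm.map A.2 _⟩
      map_zero' := by ext1; exact map_zero φ.mapMatrix
      map_add' := fun A B => by ext1; exact map_add φ.mapMatrix A.1 B.1 }
  have hΦ : Function.Surjective Φ := by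
    intro B
    have hφ : Function.Surjective φ := ZMod.castHom_surjective h
    refine ⟨⟨B.1.map (Function.surjInv hφ), Matrix.IsSymm.map B.2 _⟩, ?_⟩
    ext i j
    exact Function.surjInv_eq hφ _
  have hsum := sum_comp_of_surjective Φ hΦ (fun B => nonzeroIndicator (1 * B.1.det))
  have hdet : ∀ A : symMatrices (Fin n) (ZMod m),
      nonzeroIndicator (1 * (Φ A).1.det) = nonzeroIndicator (r * A.1.det) := by
    intro A
    have : (Φ A).1.det = φ A.1.det := (RingHom.map_det φ A.1).symm
    simp only [nonzeroIndicator, one_mul, this, hr, φ]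
  simp only [hdet] at hsum
  rw [detCount, hsum, Psym, Nsym_eq_detCount, detCount, card_symMatrices_fin, card_symMatrices_fin,
    ZMod.card, ZMod.card]
  ring

lemma ZMod.natCast_pow_mul_eq_zero_iff {p : ℕ} (hp : p.Prime) {k μ : ℕ} (hk : k ≤ μ)
    (x : ZMod (p ^ μ)) :
    (p : ZMod (p ^ μ)) ^ k * x = 0
      ↔ ZMod.castHom (pow_dvd_pow p (Nat.sub_le μ k)) (ZMod (p ^ (μ - k))) x = 0 := by
  have : NeZero (p ^ μ) := ⟨pow_ne_zero _ hp.ne_zero⟩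
  obtain ⟨a, rfl⟩ := ZMod.natCast_zmod_surjective x
  rw [map_natCast, ZMod.natCast_eq_zero_iff, ← Nat.cast_pow, ← Nat.cast_mul,
    ZMod.natCast_eq_zero_iff]
  conv_lhs => rw [← Nat.add_sub_cancel' hk, pow_add]
  exact Nat.mul_dvd_mul_iff_left (pow_pos hp.pos k)

lemma ZMod.natCast_dvd_iff_castHom_eq_zero {p μ : ℕ} [NeZero p] (hμ : μ ≠ 0)
    (x : ZMod (p ^ μ)) :
    (p : ZMod (p ^ μ)) ∣ x ↔ ZMod.castHom (dvd_pow_self p hμ) (ZMod p) x = 0 := by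
  constructor
  · rintro ⟨y, rfl⟩
    rw [map_mul, map_natCast, ZMod.natCast_self, zero_mul]
  · obtain ⟨a, rfl⟩ := ZMod.natCast_zmod_surjective x
    rw [map_natCast, ZMod.natCast_eq_zero_iff]
    exact Nat.cast_dvd_cast

lemma ZMod.not_isUnit_iff_natCast_dvd {p μ : ℕ} (hp : p.Prime) (hμ : μ ≠ 0) (x : ZMod (p ^ μ)) :
    ¬ IsUnit x ↔ (p : ZMod (p ^ μ)) ∣ x := by
  have : NeZero p := ⟨hp.ne_zero⟩
  rw [ZMod.natCast_dvd_iff_castHom_eq_zero hμ]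
  obtain ⟨a, rfl⟩ := ZMod.natCast_zmod_surjective x
  rw [map_natCast, ZMod.natCast_eq_zero_iff, ZMod.isUnit_iff_coprime,
    Nat.coprime_pow_right_iff (Nat.pos_of_ne_zero hμ), Nat.coprime_comm,
    hp.coprime_iff_not_dvd, not_not]

lemma ZMod.card_natCast_dvd {p μ : ℕ} [NeZero p] (hμ : μ ≠ 0) :
    (Nat.card {x : ZMod (p ^ μ) // (p : ZMod (p ^ μ)) ∣ x} : ℝ)
      = 1 / p * Fintype.card (ZMod (p ^ μ)) := by
  have h := sum_comp_of_surjective (ZMod.castHom (dvd_pow_self p hμ) (ZMod p)).toAddMonoidHom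
    (ZMod.castHom_surjective (dvd_pow_self p hμ)) (fun y => if y = 0 then 1 else 0)
  rw [Finset.sum_ite_eq' univ 0, if_pos (mem_univ _), ZMod.card p] at h
  rw [Nat.card_eq_fintype_card, Fintype.card_subtype, Finset.card_filter]
  push_cast
  simp only [ZMod.natCast_dvd_iff_castHom_eq_zero hμ]
  refine Eq.trans h ?_
  ring

theorem Psym_five_term_recurrence (p : ℕ) (hp : p.Prime) (q : ℝ) (hq : q = 1 / p)
    (n μ : ℕ) (hn : 2 ≤ n) (hμ : 2 ≤ μ) :
    Psym n (p ^ μ) =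
      (1 - q) * Psym (n - 1) (p ^ μ) + q * (1 - q ^ (n - 1)) * Psym (n - 2) (p ^ μ)
        + q ^ n * (1 - q) * Psym (n - 1) (p ^ (μ - 1))
        + q ^ (n + 1) * Psym n (p ^ (μ - 2)) := by
  obtain ⟨d, rfl⟩ := Nat.exists_eq_add_of_le' hn
  have : NeZero p := ⟨hp.ne_zero⟩
  have hμ0 : μ ≠ 0 := by omega
  have hN : ((p ^ μ : ℕ) : ℝ) ≠ 0 := by exact_mod_cast pow_ne_zero μ hp.ne_zero
  have hcount : ∀ n k : ℕ, k ≤ μ → detCount (Fin n) ((p : ZMod (p ^ μ)) ^ k)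
      = ((p ^ μ : ℕ) : ℝ) ^ (n * (n + 1) / 2) * Psym n (p ^ (μ - k)) := fun n k hk =>
    detCount_eq_mul_Psym _ _ (ZMod.natCast_pow_mul_eq_zero_iff hp hk)
  have hdvd : (Nat.card {x : ZMod (p ^ μ) // (p : ZMod (p ^ μ)) ∣ x} : ℝ)
      = q * Fintype.card (ZMod (p ^ μ)) := by
    rw [hq]; exact ZMod.card_natCast_dvd hμ0
  have e1 : Unit ⊕ Fin d ≃ Fin (d + 1) := Fintype.equivOfCardEq (by simp [add_comm])
  have e2 : Unit ⊕ Unit ⊕ Fin d ≃ Fin (d + 2) := Fintype.equivOfCardEq (by simp; ring)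
  have h := detCount_recurrence (ι := Fin d) (p : ZMod (p ^ μ))
    (ZMod.not_isUnit_iff_natCast_dvd hp hμ0) q hdvd
  have h0 := fun n => hcount n 0 (Nat.zero_le _)
  have h1 := hcount (d + 1) 1 (by omega)
  simp only [pow_zero, Nat.sub_zero] at h0
  rw [pow_one] at h1
  rw [detCount_congr e1, detCount_congr e1, detCount_congr e2, detCount_congr e2, h0, h0, h0, h1,
    hcount _ 2 hμ, ZMod.card, Fintype.card_fin] at h
  have t1 : (d + 1) * (d + 1 + 1) / 2 = d * (d + 1) / 2 + (d + 1) := by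
    rw [← Nat.add_mul_div_right _ _ two_pos]; congr 1; ring
  have t2 : (d + 2) * (d + 2 + 1) / 2 = d * (d + 1) / 2 + (2 * d + 3) := by
    rw [← Nat.add_mul_div_right _ _ two_pos]; congr 1; ring
  rw [t1, t2] at h
  have hd1 : d + 2 - 1 = d + 1 := rfl
  rw [hd1, Nat.add_sub_cancel]
  apply mul_left_cancel₀ (pow_ne_zero (d * (d + 1) / 2 + (2 * d + 3)) hN)
  rw [h]
  ring
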